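/- Let M ≥ 1 and let Q_k, L_k : ℝ^M → ℝ for k = 1,…,M and C_k ∈ ℝ be such that: each λ ↦ Q_k(λ) and λ ↦ L_k(λ) is continuous; |Q_k(λ) − λ_k|λ_k|| ≤ ‖λ‖²/(2M) for all λ ∈ ℝ^M and all k; and |L_k(λ)| ≤ D‖λ‖ and |C_k| ≤ E for constants D, E ≥ 0. Then there exists λ ∈ ℝ^M such that Q_k(λ) + L_k(λ) + C_k = 0 for all k = 1,…,M. -/

import Mathlib

open MeasureTheory Set in
/-- Change of variables for small perturbations of the identity. -/
lemma aux_small {V : Type*} [NormedAddCommGroup V] [InnerProductSpace ℝ V] [FiniteDimensional ℝ V]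
    [MeasurableSpace V] [BorelSpace V] (g : V → V) (hg : ContDiff ℝ 1 g) (K : NNReal)
    (hK : LipschitzWith K g) (r : ℝ) (hr : ∀ x, x ∉ Metric.closedBall (0 : V) r → g x = 0)
    (t : ℝ) (ht0 : 0 ≤ t) (htK : t * K < 1) (φ : V → ℝ) :
    ∫ x in Metric.closedBall (0 : V) r, (1 + t • fderiv ℝ g x).det * φ (x + t • g x)
      = ∫ x in Metric.closedBall (0 : V) r, φ x := by
  set B := Metric.closedBall (0 : V) r with hB
  have hlip : ∀ x y, ‖t • g x - t • g y‖ ≤ (t * K) * ‖x - y‖ := by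
    intro x y
    rw [← smul_sub, norm_smul, Real.norm_of_nonneg ht0, mul_assoc]
    have := hK.dist_le_mul x y
    rw [dist_eq_norm, dist_eq_norm] at this
    gcongr
  have hinj : Function.Injective (fun x => x + t • g x) := by
    intro x y hxy
    have h1 : x - y = -(t • g x - t • g y) := by
      have h2 : x + t • g x = y + t • g y := hxy
      rw [← sub_eq_zero] at h2 ⊢
      rw [← h2]; abel
    have h2 := hlip x y
    rw [← norm_neg, ← h1] at h2
    have h3 : ‖x - y‖ = 0 := by nlinarith [norm_nonneg (x - y)]
    exact sub_eq_zero.1 (norm_eq_zero.1 h3)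
  have hsurj : Function.Surjective (fun x => x + t • g x) := by
    intro y
    have hc : ContractingWith (t.toNNReal * K) (fun x => y - t • g x) := by
      refine ⟨?_, LipschitzWith.of_dist_le_mul fun a b => ?_⟩
      · rw [← NNReal.coe_lt_coe]; simpa [Real.coe_toNNReal t ht0] using htK
      · rw [dist_eq_norm, dist_eq_norm]
        have := hlip b a
        rw [norm_sub_rev b a] at this
        simpa [Real.coe_toNNReal t ht0] using this
    refine ⟨ContractingWith.fixedPoint _ hc, ?_⟩
    have := hc.fixedPoint_isFixedPt
    have h2 : y - t • g (ContractingWith.fixedPoint _ hc) = ContractingWith.fixedPoint _ hc := this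
    show ContractingWith.fixedPoint _ hc + t • g (ContractingWith.fixedPoint _ hc) = y
    nth_rewrite 1 [← h2]
    abel
  have himg : (fun x => x + t • g x) '' B = B := by
    have hout : ∀ x, x ∉ B → x + t • g x = x := fun x hx => by simp [hr x hx]
    apply Subset.antisymm
    · rintro _ ⟨x, hx, rfl⟩
      by_contra h
      have := hout _ h
      have h3 := hinj this
      simp only at h3
      apply h
      show x + t • g x ∈ B
      rw [h3]
      exact hx
    · intro y hy
      obtain ⟨x, hx⟩ := hsurj y
      refine ⟨x, ?_, hx⟩
      by_contra h
      have h2 := hout x h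
      simp only at hx
      rw [h2] at hx
      exact h (hx ▸ hy)
  have hdet : ∀ x, 0 < (1 + t • fderiv ℝ g x).det := by
    intro x
    have hA : ‖fderiv ℝ g x‖ ≤ K := norm_fderiv_le_of_lipschitz ℝ hK
    have hne : ∀ s ∈ Icc 0 t, (1 + s • fderiv ℝ g x).det ≠ 0 := by
      intro s hs h0
      have := LinearMap.bot_lt_ker_of_det_eq_zero h0
      obtain ⟨v, hv, hv0⟩ := (Submodule.ne_bot_iff _).1 this.ne'
      have hv1 : v + s • fderiv ℝ g x v = 0 := by simpa using hv
      have h2 : ‖v‖ = ‖s • fderiv ℝ g x v‖ := by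
        rw [eq_neg_of_add_eq_zero_left hv1, norm_neg]
        rw [← eq_neg_of_add_eq_zero_left hv1]
      rw [norm_smul, Real.norm_of_nonneg hs.1] at h2
      have h3 : ‖fderiv ℝ g x v‖ ≤ K * ‖v‖ :=
        (fderiv ℝ g x).le_of_opNorm_le hA v
      have h4 : ‖v‖ ≤ t * (K * ‖v‖) := by
        rw [h2]
        have := h2 ▸ h3
        exact mul_le_mul hs.2 (h2 ▸ h3) (norm_nonneg _) ht0
      have h5 : 0 < ‖v‖ := norm_pos_iff.2 hv0
      nlinarith
    have hcont : Continuous fun s : ℝ => (1 + s • fderiv ℝ g x).det :=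
      ContinuousLinearMap.continuous_det.comp (by fun_prop)
    by_contra hneg
    push Not at hneg
    have h1 : (1 + (0:ℝ) • fderiv ℝ g x).det = 1 := by
      simp [ContinuousLinearMap.det]
    have := intermediate_value_Icc' ht0 hcont.continuousOn
    obtain ⟨s, hs, hs0⟩ := this ⟨hneg, by simp only [h1]; norm_num⟩
    exact hne s hs hs0
  have hcv := integral_image_eq_integral_abs_det_fderiv_smul (volume : Measure V)
    (s := B) (f := fun x => x + t • g x) (f' := fun x => 1 + t • fderiv ℝ g x)
    Metric.isClosed_closedBall.measurableSet
    (fun x _ => by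
      have h := ((hg.differentiable (by norm_num)) x).hasFDerivAt
      exact ((hasFDerivAt_id x).add (h.const_smul t)).hasFDerivWithinAt)
    hinj.injOn φ
  rw [himg] at hcv
  rw [hcv]
  refine integral_congr_ae (Filter.Eventually.of_forall fun x => ?_)
  simp [abs_of_pos (hdet x)]

/-- The integrand is a polynomial in `t`. -/
lemma aux_poly {V : Type*} [NormedAddCommGroup V] [InnerProductSpace ℝ V] [FiniteDimensional ℝ V]
    (A : V →L[ℝ] V) (x y : V) (c : ℝ) (m : ℕ) :
    ∃ p : Polynomial ℝ, p.natDegree ≤ Module.finrank ℝ V + 2 * m ∧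
      ∀ t : ℝ, p.eval t = (1 + t • A).det * (1 - c * ‖x + t • y‖ ^ 2) ^ m := by
  classical
  let b := Module.finBasis ℝ V
  let N := LinearMap.toMatrix b b (A : V →ₗ[ℝ] V)
  let p1 : Polynomial ℝ := ((Polynomial.X : Polynomial ℝ) • N.map (Polynomial.C : ℝ →+* Polynomial ℝ) +
    (1 : Matrix (Fin (Module.finrank ℝ V)) (Fin (Module.finrank ℝ V)) ℝ).map (Polynomial.C : ℝ →+* Polynomial ℝ)).det
  let p2 : Polynomial ℝ := Polynomial.C (-c * ‖y‖ ^ 2) * Polynomial.X ^ 2 +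
    Polynomial.C (-c * (2 * inner ℝ x y)) * Polynomial.X + Polynomial.C (1 - c * ‖x‖ ^ 2)
  refine ⟨p1 * p2 ^ m, ?_, fun t => ?_⟩
  · refine Polynomial.natDegree_mul_le.trans (add_le_add ?_ ?_)
    · exact (Polynomial.natDegree_det_X_add_C_le N 1).trans (by simp)
    · refine Polynomial.natDegree_pow_le.trans ?_
      rw [mul_comm]
      exact Nat.mul_le_mul_right _ Polynomial.natDegree_quadratic_le
  · rw [Polynomial.eval_mul, Polynomial.eval_pow]
    congr 1
    · have : p1.eval t = (1 + t • N).det := by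
        show (Polynomial.evalRingHom t) p1 = _
        rw [RingHom.map_det]
        congr 1
        ext i j
        simp [Matrix.one_apply]
        split_ifs <;> simp <;> ring
      rw [this, ContinuousLinearMap.det, ← LinearMap.det_toMatrix b]
      congr 1
      simp [N, map_add, LinearMap.toMatrix_one]
    · congr 1
      rw [norm_add_sq_real, norm_smul, inner_smul_right, mul_pow, Real.norm_eq_abs, sq_abs]
      simp [p2]
      ring

open MeasureTheory Set in
/-- The change of variables identity holds for `t = 1`. -/
lemma aux_one {V : Type*} [NormedAddCommGroup V] [InnerProductSpace ℝ V] [FiniteDimensional ℝ V]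
    [MeasurableSpace V] [BorelSpace V] (g : V → V) (hg : ContDiff ℝ 1 g) (K : NNReal)
    (hK : LipschitzWith K g) (r : ℝ) (hr : ∀ x, x ∉ Metric.closedBall (0 : V) r → g x = 0)
    (c : ℝ) (m : ℕ) :
    ∫ x in Metric.closedBall (0 : V) r,
        (1 + fderiv ℝ g x).det * (1 - c * ‖x + g x‖ ^ 2) ^ m
      = ∫ x in Metric.closedBall (0 : V) r, (1 - c * ‖x‖ ^ 2) ^ m := by
  set B := Metric.closedBall (0 : V) r with hB
  let n := Module.finrank ℝ V + 2 * m + 1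
  let s := Finset.range n
  let v : ℕ → ℝ := fun i => 1 / ((i + 1) * (K + 1))
  have hK0 : (0 : ℝ) < K + 1 := by positivity
  have hv : Set.InjOn v s := by
    intro i _ j _ hij
    simp only [v] at hij
    have h1 : (0:ℝ) < (i + 1) * (K + 1) := by positivity
    have h2 : (0:ℝ) < (j + 1) * (K + 1) := by positivity
    rw [one_div, one_div, inv_inj] at hij
    have := mul_right_cancel₀ hK0.ne' hij
    exact_mod_cast add_right_cancel this
  have hv0 : ∀ i, 0 ≤ v i := fun i => by positivity
  have hvK : ∀ i, v i * K < 1 := by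
    intro i
    simp only [v]
    rw [one_div, inv_mul_lt_iff₀ (by positivity)]
    have : (0:ℝ) ≤ i := by positivity
    have : (0:ℝ) ≤ K := by positivity
    nlinarith [mul_nonneg ‹(0:ℝ) ≤ i› ‹(0:ℝ) ≤ K›]
  let w : ℕ → ℝ := fun i => (Lagrange.basis s v i).eval 1
  have key : ∀ p : Polynomial ℝ, p.natDegree ≤ Module.finrank ℝ V + 2 * m →
      p.eval 1 = ∑ i ∈ s, w i * p.eval (v i) := by
    intro p hp
    have hd : p.degree < s.card := by
      refine Polynomial.degree_le_natDegree.trans_lt ?_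
      simp only [s, Finset.card_range, n]
      exact_mod_cast Nat.lt_succ_of_le hp
    have := Lagrange.eq_interpolate hv hd
    conv_lhs => rw [this, Lagrange.interpolate_apply, Polynomial.eval_finsetSum]
    refine Finset.sum_congr rfl fun i _ => ?_
    simp [w, mul_comm]
  have hw : ∑ i ∈ s, w i = 1 := by
    have := key 1 (by simp)
    simpa using this.symm
  have hpt : ∀ x, (1 + fderiv ℝ g x).det * (1 - c * ‖x + g x‖ ^ 2) ^ m =
      ∑ i ∈ s, w i * ((1 + v i • fderiv ℝ g x).det * (1 - c * ‖x + v i • g x‖ ^ 2) ^ m) := by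
    intro x
    obtain ⟨p, hp, hpe⟩ := aux_poly (fderiv ℝ g x) x (g x) c m
    have := key p hp
    simp only [hpe, one_smul] at this
    exact this
  simp_rw [hpt]
  have hcg : Continuous g := hg.continuous
  have hcf : Continuous (fderiv ℝ g) := hg.continuous_fderiv (by norm_num)
  rw [integral_finsetSum]
  · have : ∀ i ∈ s, ∫ x in B, w i * ((1 + v i • fderiv ℝ g x).det *
        (1 - c * ‖x + v i • g x‖ ^ 2) ^ m) = w i * ∫ x in B, (1 - c * ‖x‖ ^ 2) ^ m := by
      intro i _
      rw [integral_const_mul]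
      congr 1
      exact aux_small g hg K hK r hr (v i) (hv0 i) (hvK i) (fun y => (1 - c * ‖y‖ ^ 2) ^ m)
    rw [Finset.sum_congr rfl this, ← Finset.sum_mul, hw, one_mul]
  · intro i _
    refine Continuous.continuousOn ?_ |>.integrableOn_compact (isCompact_closedBall _ _)
    have : Continuous fun x => (1 + v i • fderiv ℝ g x).det :=
      ContinuousLinearMap.continuous_det.comp (by fun_prop)
    fun_prop

open MeasureTheory Set in
/-- A smooth compactly supported perturbation of the identity has a zero. -/
lemma aux_smooth {V : Type*} [NormedAddCommGroup V] [InnerProductSpace ℝ V]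
    [FiniteDimensional ℝ V] (g : V → V) (hg : ContDiff ℝ 1 g) (hs : HasCompactSupport g) :
    ∃ x, x + g x = 0 := by
  borelize V
  by_contra hno
  push Not at hno
  obtain ⟨K, hK⟩ := hg.lipschitzWith_of_hasCompactSupport hs (by norm_num)
  obtain ⟨r0, hr0⟩ := hs.isCompact.isBounded.subset_closedBall (0 : V)
  set r := max r0 1
  have hr1 : 1 ≤ r := le_max_right _ _
  have hr : ∀ x, x ∉ Metric.closedBall (0 : V) r → g x = 0 := by
    intro x hx
    by_contra h
    exact hx (Metric.closedBall_subset_closedBall (le_max_left _ _)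
      (hr0 (subset_tsupport _ h)))
  set B := Metric.closedBall (0 : V) r with hB
  have hBc : IsCompact B := isCompact_closedBall _ _
  have hBne : B.Nonempty := ⟨0, by simp [hB]; linarith⟩
  have hcg : Continuous g := hg.continuous
  have hcH : Continuous fun x => ‖x + g x‖ := by fun_prop
  obtain ⟨x0, -, hx0⟩ := hBc.exists_isMinOn hBne hcH.continuousOn
  obtain ⟨x1, -, hx1⟩ := hBc.exists_isMaxOn hBne hcH.continuousOn
  set ε := min ‖x0 + g x0‖ 1
  have hε : 0 < ε := lt_min (norm_pos_iff.2 (hno x0)) one_pos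
  have hε1 : ε ≤ 1 := min_le_right _ _
  set R := max ‖x1 + g x1‖ r
  have hRr : r ≤ R := le_max_right _ _
  have hR : 0 < R := by linarith
  set c := (R ^ 2)⁻¹
  have hc : 0 < c := by positivity
  have hcR : c * R ^ 2 = 1 := by simp only [c]; field_simp
  set a := 1 - c * ε ^ 2
  set b := 1 - c * (ε / 2) ^ 2
  have hab : a < b := by
    simp only [a, b]; nlinarith [mul_pos hc (pow_pos hε 2)]
  have ha : 0 ≤ a := by
    have : ε ^ 2 ≤ R ^ 2 := by gcongr; linarith
    simp only [a]; nlinarith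
  have hb : 0 < b := by linarith
  have hdetc : Continuous fun x => (1 + fderiv ℝ g x).det :=
    ContinuousLinearMap.continuous_det.comp
      (continuous_const.add (hg.continuous_fderiv (by norm_num)))
  set W := ∫ x in B, |(1 + fderiv ℝ g x).det|
  have hW : 0 ≤ W := integral_nonneg fun x => abs_nonneg _
  set B' := Metric.closedBall (0 : V) (ε / 2)
  set v := (volume : Measure V).real B'
  have hvpos : 0 < v := by
    refine ENNReal.toReal_pos ?_ (isCompact_closedBall _ _).measure_lt_top.ne
    exact (Metric.measure_closedBall_pos _ _ (by positivity)).ne'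
  have hmain : ∀ m : ℕ, b ^ m * v ≤ a ^ m * W := by
    intro m
    have h1 := aux_one g hg K hK r hr c m
    have h2 : ∫ x in B, (1 + fderiv ℝ g x).det * (1 - c * ‖x + g x‖ ^ 2) ^ m ≤ a ^ m * W := by
      rw [← integral_const_mul]
      apply setIntegral_mono_on
      · refine Continuous.continuousOn ?_ |>.integrableOn_compact hBc
        fun_prop
      · refine Continuous.continuousOn ?_ |>.integrableOn_compact hBc
        fun_prop
      · exact hBc.isClosed.measurableSet
      · intro x hx
        have e1 : ε ≤ ‖x + g x‖ := (min_le_left _ _).trans (hx0 hx)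
        have e2 : ‖x + g x‖ ≤ R := (hx1 hx : ‖x + g x‖ ≤ ‖x1 + g x1‖).trans (le_max_left _ _)
        have e3 : ‖x + g x‖ ^ 2 ≤ R ^ 2 := by gcongr
        have e4 : ε ^ 2 ≤ ‖x + g x‖ ^ 2 := by gcongr
        have e5 : 0 ≤ 1 - c * ‖x + g x‖ ^ 2 := by nlinarith
        have e6 : 1 - c * ‖x + g x‖ ^ 2 ≤ a := by simp only [a]; nlinarith
        calc _ ≤ |(1 + fderiv ℝ g x).det| * (1 - c * ‖x + g x‖ ^ 2) ^ m := by
              gcongr; exact le_abs_self _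
          _ ≤ |(1 + fderiv ℝ g x).det| * a ^ m := by gcongr
          _ = _ := mul_comm _ _
    have h3 : b ^ m * v ≤ ∫ x in B, (1 - c * ‖x‖ ^ 2) ^ m := by
      have hsub : B' ⊆ B := Metric.closedBall_subset_closedBall (by linarith)
      have hint : IntegrableOn (fun x : V => (1 - c * ‖x‖ ^ 2) ^ m) B := by
        refine Continuous.continuousOn ?_ |>.integrableOn_compact hBc
        fun_prop
      have hB'c : IsCompact B' := isCompact_closedBall _ _
      calc b ^ m * v = ∫ x in B', b ^ m := by
            rw [setIntegral_const, smul_eq_mul, mul_comm]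
        _ ≤ ∫ x in B', (1 - c * ‖x‖ ^ 2) ^ m := by
            apply setIntegral_mono_on
            · exact integrableOn_const hB'c.measure_lt_top.ne
            · exact hint.mono_set hsub
            · exact hB'c.isClosed.measurableSet
            · intro x hx
              have : ‖x‖ ≤ ε / 2 := by simpa [B'] using hx
              have e : ‖x‖ ^ 2 ≤ (ε / 2) ^ 2 := by gcongr
              have : b ≤ 1 - c * ‖x‖ ^ 2 := by simp only [b]; nlinarith
              gcongr
        _ ≤ _ := by
            apply setIntegral_mono_set hint _ hsub.eventuallyLE
            refine (ae_restrict_iff' hBc.isClosed.measurableSet).2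
              (Filter.Eventually.of_forall fun x hx => ?_)
            have e0 : ‖x‖ ≤ r := by simpa [B] using hx
            have e : ‖x‖ ^ 2 ≤ R ^ 2 := by gcongr; linarith
            have : 0 ≤ 1 - c * ‖x‖ ^ 2 := by nlinarith
            exact pow_nonneg this m
    linarith
  obtain ⟨m, hm⟩ := exists_pow_lt_of_lt_one (x := v / (W + 1)) (y := a / b) (by positivity)
    ((div_lt_one hb).2 hab)
  have h1 := hmain m
  rw [div_pow, div_lt_div_iff₀ (by positivity) (by positivity)] at hm
  nlinarith [pow_nonneg ha m]

/-- Continuous version. -/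
lemma aux_cont {V : Type*} [NormedAddCommGroup V] [InnerProductSpace ℝ V]
    [FiniteDimensional ℝ V] (g : V → V) (hg : Continuous g) (hs : HasCompactSupport g) :
    ∃ x, x + g x = 0 := by
  by_contra hno
  push Not at hno
  obtain ⟨h, hh, hd, hsupp⟩ := hg.exists_contDiff_approx (ε := fun x => ‖x + g x‖) 1 (by fun_prop)
    (fun x => norm_pos_iff.2 (hno x))
  obtain ⟨x, hx⟩ := aux_smooth h (by exact_mod_cast hh) (hs.mono hsupp)
  have := hd x
  rw [eq_neg_of_add_eq_zero_right hx, dist_eq_norm] at this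
  rw [← norm_neg (x + g x), neg_add'] at this
  exact lt_irrefl _ this

/-- A coercive continuous vector field has a zero. -/
lemma aux_coercive {V : Type*} [NormedAddCommGroup V] [InnerProductSpace ℝ V]
    [FiniteDimensional ℝ V] (G : V → V) (hG : Continuous G) (R : ℝ)
    (hR0 : 0 < R) (hR : ∀ x, R ≤ ‖x‖ → 0 < inner ℝ (G x) x) :
    ∃ x, G x = 0 := by
  let χ : V → ℝ := fun x => max 0 (min 1 (R + 1 - ‖x‖))
  have hχ : Continuous χ := by fun_prop
  have hχ0 : ∀ x, 0 ≤ χ x := fun x => le_max_left _ _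
  have hχ1 : ∀ x, χ x ≤ 1 := fun x => max_le zero_le_one (min_le_left _ _)
  obtain ⟨x, hx⟩ := aux_cont (fun x => χ x • (G x - x)) (by fun_prop) (by
    refine HasCompactSupport.of_support_subset_isCompact
      (isCompact_closedBall (0 : V) (R + 1)) fun x hx => ?_
    by_contra h
    apply hx
    have : R + 1 < ‖x‖ := by simpa using h
    have : χ x = 0 := max_eq_left ((min_le_right _ _).trans (by linarith))
    simp [this])
  refine ⟨x, ?_⟩
  rcases lt_or_ge ‖x‖ R with h | h
  · have : χ x = 1 := by
      simp only [χ]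
      rw [min_eq_left (by linarith)]; norm_num
    simpa [this] using hx
  · exfalso
    have h1 := hR x h
    have h2 : inner ℝ (x + χ x • (G x - x)) x = 0 := by rw [hx, inner_zero_left]
    rw [inner_add_left, inner_smul_left, inner_sub_left, real_inner_self_eq_norm_sq] at h2
    simp only [conj_trivial] at h2
    have h3 : 0 < ‖x‖ ^ 2 := pow_pos (hR0.trans_le h) 2
    rcases (hχ0 x).eq_or_lt with h4 | h4
    · rw [← h4] at h2; linarith
    · nlinarith [mul_pos h4 h1, mul_nonneg (sub_nonneg.2 (hχ1 x)) h3.le]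

theorem stmt_5 (M : ℕ) (hM : 1 ≤ M)
    (Q L : Fin M → EuclideanSpace ℝ (Fin M) → ℝ) (C : Fin M → ℝ)
    (hQcont : ∀ k, Continuous (Q k)) (hLcont : ∀ k, Continuous (L k))
    (hQest : ∀ (l : EuclideanSpace ℝ (Fin M)) (k : Fin M),
      abs (Q k l - l k * |l k|) ≤ ‖l‖ ^ 2 / (2 * M))
    (D E : ℝ) (hD : 0 ≤ D) (hE : 0 ≤ E)
    (hLest : ∀ (l : EuclideanSpace ℝ (Fin M)) (k : Fin M), |L k l| ≤ D * ‖l‖)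
    (hCest : ∀ k : Fin M, |C k| ≤ E) :
    ∃ l : EuclideanSpace ℝ (Fin M), ∀ k : Fin M, Q k l + L k l + C k = 0 := by
  have hM0 : (1 : ℝ) ≤ M := by exact_mod_cast hM
  obtain ⟨l, hl⟩ := aux_coercive
    (fun l : EuclideanSpace ℝ (Fin M) => WithLp.toLp 2 fun k => Q k l + L k l + C k)
    (by fun_prop) (2 * M * (D + E) + 1) (by positivity) (by
      intro x hx
      set N := ‖x‖ with hN
      set T := N ^ 2 / (2 * M) + D * N + E with hT
      have hDE : 0 ≤ 2 * M * (D + E) := by positivity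
      have hN1 : 1 ≤ N := by linarith
      have hN2 : N ^ 2 = ∑ k, |x k| ^ 2 := by
        rw [hN, EuclideanSpace.norm_sq_eq]; simp
      set S1 := ∑ k, |x k|
      set S3 := ∑ k, |x k| ^ 3
      have hS1 : 0 ≤ S1 := Finset.sum_nonneg fun _ _ => abs_nonneg _
      have hlow : S3 - S1 * T ≤ inner ℝ (WithLp.toLp 2 fun k => Q k x + L k x + C k) x := by
        rw [PiLp.inner_apply, Finset.sum_mul, ← Finset.sum_sub_distrib]
        refine Finset.sum_le_sum fun k _ => ?_
        have h1 := hQest x k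
        have h2 := hLest x k
        have h3 := hCest k
        have h4 : |(Q k x - x k * |x k|) + L k x + C k| ≤ T :=
          (abs_add_three _ _ _).trans (by rw [hT]; gcongr)
        have h5 : |((Q k x - x k * |x k|) + L k x + C k) * x k| ≤ T * |x k| := by
          rw [abs_mul]; gcongr
        have h6 := (abs_le.1 h5).1
        have h7 : |x k| ^ 3 = x k * x k * |x k| := by
          rw [pow_succ, sq_abs]; ring
        simp only [RCLike.inner_apply, conj_trivial]
        rw [h7]
        nlinarith
      have hc1 : S1 ^ 2 ≤ M * N ^ 2 := by
        rw [hN2]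
        simpa using sq_sum_le_card_mul_sum_sq (s := Finset.univ) (f := fun k => |x k|)
      have hc2 : (N ^ 2) ^ 2 ≤ S3 * S1 := by
        rw [hN2]
        refine Finset.sum_sq_le_sum_mul_sum_of_sq_le_mul _ (fun _ _ => by positivity)
          (fun _ _ => by positivity) (fun i _ => le_of_eq (by ring))
      have hT0 : 0 ≤ T := by positivity
      have hNT : M * T < N ^ 2 := by
        have : M * T = N ^ 2 / 2 + M * (D * N + E) := by rw [hT]; field_simp; ring
        rw [this]
        have e1 : (2 * M * (D + E) + 1) * N ≤ N * N := by gcongr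
        have e2 : M * E ≤ M * E * N := le_mul_of_one_le_right (by positivity) hN1
        nlinarith
      have hS1pos : 0 < S1 := by
        refine hS1.lt_of_ne fun h => ?_
        rw [← h] at hc2
        have : 0 < (N ^ 2) ^ 2 := by positivity
        linarith
      have hfin : S1 * (S1 * T) < S1 * S3 := by
        have e1 : S1 ^ 2 * T ≤ M * N ^ 2 * T := by gcongr
        have e2 : N ^ 2 * (M * T) < N ^ 2 * N ^ 2 := by gcongr
        nlinarith
      have := lt_of_mul_lt_mul_left hfin hS1
      linarith)
  refine ⟨l, fun k => ?_⟩
  have := congrArg (fun v : EuclideanSpace ℝ (Fin M) => v k) hl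
  simpa using this
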